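/- Consider the iterates of Algorithm 1 under Assumptions (A1)–(A4), where the step-sizes are γ(k) = 1/(η(k) + L(τ_max+1)²) for some strictly positive sequence {η(k)}. Then for all T ∈ ℕ and any optimizer x* ∈ X*: Σ_{k=0}^{T−1} (φ(x(k+1)) − φ*) ≤ Σ_{k=0}^{T−1} (1/(2η(k)))‖e(d(k))‖_*² + Σ_{k=0}^{T−1} ⟨e(d(k)), x(k) − x*⟩ + (1/γ(0)) D_ω(x(0), x*) + Σ_{k=0}^{T−1} (1/γ(k+1) − 1/γ(k)) D_ω(x(k+1), x*) − (μ_Ψ/2) Σ_{k=0}^{T−1} ‖x(k+1) − x*‖², where e(k) := ∇f(x(k)) − g_ave(k) and μ_Ψ ≥ 0 is the strong convexity modulus of Ψ (μ_Ψ = 0 if Ψ is merely convex). -/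

import Mathlib

/-!
Write `X k = x k`. Optimality in the proximal step makes an explicit vector a subgradient of `Ψ` at
`X (k + 1)` (`prox_subgradient`), and `hΨstrong` upgrades the subgradient inequality by the
`μΨ` term; the three-point identity for `D` turns the result into
`Ψ (X (k + 1)) - Ψ x* ≤ ⟪g, x* - X (k + 1)⟫ +
  (D (X k) x* - D (X (k + 1)) x* - D (X k) (X (k + 1))) / γ k`
minus the strong convexity term. Convexity and `L`-smoothness of `f` at the delayed point
`X (d k)` bound `f (X (k + 1)) - f x*`. The two estimates are added. Young's inequality with weight
`η k` splits `⟪e k, X (k + 1) - X k⟫`, and `D (X k) (X (k + 1)) ≥ N (X (k + 1) - X k) ^ 2 / 2`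
absorbs the resulting quadratic term, leaving `- L (τmax + 1) ^ 2 / 2 * N (X (k + 1) - X k) ^ 2`.
After summation this surplus pays for the delays: `L / 2 * N (X (k + 1) - X (d k)) ^ 2` is at most
`L (τmax + 1) / 2` times the squared step lengths in a window of `τmax + 1` steps (`sq_delay_le`),
and each step lies in at most `τmax + 1` windows (`sum_window_le`). The Bregman distances
telescope.

The convexity and smoothness of `f` need an argument (`expectation_bounds`): the loss is not assumed
measurable or integrable in `ξ`, and `f` takes the value `0` of the Bochner integral where
`F y ·` is not integrable. On the set where `f` does not vanish, `F y ·` is integrable, so along a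
line `± f` plus the appropriate quadratic is convex on every interval without zeros of `f`. As `f`
is differentiable, this already forces convexity on the whole line
(`convexOn_univ_of_nonvanishing`): at an extremal point where the function exceeds a chord the most,
comparison with the tangent parabola excludes zeros of `f` on one side of that point, so convexity
holds there and contradicts extremality.
-/

open scoped RealInnerProductSpace Classical
open MeasureTheory

/-- `N` is a norm on `ℝⁿ`. -/
def IsNorm {n : ℕ} (N : EuclideanSpace ℝ (Fin n) → ℝ) : Prop :=
  (∀ x, 0 ≤ N x) ∧ (∀ x, N x = 0 ↔ x = 0) ∧
  (∀ (c : ℝ) (x : EuclideanSpace ℝ (Fin n)), N (c • x) = |c| * N x) ∧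
  (∀ x y, N (x + y) ≤ N x + N y)

/-- The dual norm of `N`: `‖y‖_* = sup_{N(x) ≤ 1} ⟨x, y⟩`. -/
noncomputable def dualNorm {n : ℕ} (N : EuclideanSpace ℝ (Fin n) → ℝ)
    (y : EuclideanSpace ℝ (Fin n)) : ℝ :=
  sSup {r : ℝ | ∃ x : EuclideanSpace ℝ (Fin n), N x ≤ 1 ∧ r = ⟪x, y⟫}

/-! ### Convexity on the line from convexity between zeros -/

/-- For a continuous function, convexity passes from an open interval to its closure. -/
lemma convexOn_Icc_of_Ioo {g : ℝ → ℝ} (hg : Continuous g) {p q : ℝ} (hpq : p < q)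
    (h : ConvexOn ℝ (Set.Ioo p q) g) : ConvexOn ℝ (Set.Icc p q) g := by
  refine ⟨convex_Icc p q, ?_⟩
  intro s hs t ht a b ha hb hab
  have hcl : IsClosed {z : ℝ × ℝ | g (a • z.1 + b • z.2) ≤ a • g z.1 + b • g z.2} :=
    isClosed_le (by fun_prop) (by fun_prop)
  have hsub : Set.Ioo p q ×ˢ Set.Ioo p q ⊆
      {z : ℝ × ℝ | g (a • z.1 + b • z.2) ≤ a • g z.1 + b • g z.2} :=
    fun z hz => h.2 hz.1 hz.2 ha hb hab
  have h2 := hcl.closure_subset_iff.2 hsub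
  rw [closure_prod_eq, closure_Ioo hpq.ne] at h2
  exact h2 (Set.mk_mem_prod hs ht)

/-- The contradiction at a maximum point `m` of `g t = f t + M / 2 * t ^ 2 - c * t` that is strict
on its left, when `f` either does not vanish at `m` or has nonnegative slope there. In both cases
`f` has no zeros in some interval `[p, m)`, so `g` is convex on `[p, m]`; a convex function lies
above its horizontal tangent at `m`. -/
lemma strict_left_max_false {f f' : ℝ → ℝ} (hf : ∀ t, HasDerivAt f (f' t) t) {M : ℝ} (hM : 0 ≤ M)
    (hconv : ∀ p q, (∀ t ∈ Set.Ioo p q, f t ≠ 0) →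
      ConvexOn ℝ (Set.Ioo p q) (fun t => f t + M / 2 * t ^ 2))
    {c u m : ℝ} (hum : u < m) (hc : f' m + M * m = c)
    (hmax : ∀ t ∈ Set.Ico u m,
      f t + M / 2 * t ^ 2 - c * t < f m + M / 2 * m ^ 2 - c * m)
    (hcase : f m ≠ 0 ∨ 0 ≤ f' m) : False := by
  have hfc : Continuous f := continuous_iff_continuousAt.2 fun t => (hf t).continuousAt
  obtain ⟨p, hup, hpm, hne⟩ : ∃ p, u ≤ p ∧ p < m ∧ ∀ t ∈ Set.Ioo p m, f t ≠ 0 := by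
    by_cases h0 : f m = 0
    · have hs : 0 ≤ f' m := hcase.resolve_left (fun h => h h0)
      refine ⟨u, le_rfl, hum, fun t ht => ?_⟩
      have h1 := hmax t ⟨ht.1.le, ht.2⟩
      -- `f t` lies below the concave parabola tangent to `f` at `m`, which is negative here
      have h2 : f t < f' m * (t - m) - M / 2 * (t - m) ^ 2 := by
        subst hc; nlinarith
      have h3 : f' m * (t - m) ≤ 0 := mul_nonpos_of_nonneg_of_nonpos hs (by linarith [ht.2])
      have h4 : 0 ≤ M / 2 * (t - m) ^ 2 := by positivity
      linarith
    · have hev : ∀ᶠ t in nhds m, f t ≠ 0 := hfc.continuousAt.eventually_ne h0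
      obtain ⟨δ, hδ, hball⟩ := Metric.eventually_nhds_iff.1 hev
      refine ⟨max u (m - δ), le_max_left _ _, max_lt hum (by linarith), fun t ht => hball ?_⟩
      have := (le_max_right u (m - δ)).trans_lt ht.1
      rw [Real.dist_eq, abs_lt]
      constructor <;> linarith [ht.2]
  have hcv := convexOn_Icc_of_Ioo (by fun_prop) hpm (hconv p m hne)
  have hder : HasDerivAt (fun t => f t + M / 2 * t ^ 2) c m := by
    have := (hf m).add (((hasDerivAt_id m).pow 2).const_mul (M / 2))
    refine this.congr_deriv ?_
    rw [← hc]; simp; ring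
  have hsl := hcv.slope_le_of_hasDerivAt (Set.left_mem_Icc.2 hpm.le) (Set.right_mem_Icc.2 hpm.le)
    hpm hder
  rw [slope_def_field, div_le_iff₀ (by linarith)] at hsl
  have := hmax p ⟨hup, hpm⟩
  linarith

/-- A differentiable `f` such that `f + M / 2 * t ^ 2` is convex on each open interval on which `f`
has no zero: then `f + M / 2 * t ^ 2` is convex on the whole line. -/
lemma convexOn_univ_of_nonvanishing {f f' : ℝ → ℝ} (hf : ∀ t, HasDerivAt f (f' t) t) {M : ℝ}
    (hM : 0 ≤ M)
    (hconv : ∀ p q, (∀ t ∈ Set.Ioo p q, f t ≠ 0) →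
      ConvexOn ℝ (Set.Ioo p q) (fun t => f t + M / 2 * t ^ 2)) :
    ConvexOn ℝ Set.univ (fun t => f t + M / 2 * t ^ 2) := by
  have hfc : Continuous f := continuous_iff_continuousAt.2 fun t => (hf t).continuousAt
  refine LinearOrder.convexOn_of_lt convex_univ ?_
  intro u _ w _ huw a b ha hb hab
  by_contra! hlt
  simp only [smul_eq_mul] at hlt
  set q : ℝ → ℝ := fun t => f t + M / 2 * t ^ 2 with hq
  -- subtract the linear function whose slope is that of the chord from `u` to `w`
  obtain ⟨c, hc⟩ : ∃ c, c * (w - u) = q w - q u :=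
    ⟨(q w - q u) / (w - u), div_mul_cancel₀ _ (by linarith)⟩
  set g : ℝ → ℝ := fun t => f t + M / 2 * t ^ 2 - c * t with hg
  have hgc : Continuous g := by fun_prop
  have hguw : g w = g u := by simp only [hg]; simp only [hq] at hc; linarith
  obtain ⟨v, hv, hvmax⟩ := isCompact_Icc.exists_isMaxOn (Set.nonempty_Icc.2 huw.le) hgc.continuousOn
  have hz : a * u + b * w ∈ Set.Icc u w := by
    have hb' : b = 1 - a := by linarith
    subst hb'
    constructor <;> nlinarith
  have hgv : g u < g v := by
    have h1 : g (a * u + b * w) ≤ g v := hvmax hz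
    refine lt_of_lt_of_le ?_ h1
    have h2 : a * g u + b * g w < g (a * u + b * w) := by
      have e1 : ∀ t, g t = q t - c * t := fun t => rfl
      simp only [e1]
      have : q (a * u + b * w) > a * q u + b * q w := hlt
      nlinarith
    rw [hguw, ← add_mul, hab, one_mul] at h2
    exact h2
  have hK : IsCompact (Set.Icc u w ∩ g ⁻¹' {g v}) :=
    isCompact_Icc.inter_right ((isClosed_singleton).preimage hgc)
  have hKne : (Set.Icc u w ∩ g ⁻¹' {g v}).Nonempty := ⟨v, hv, rfl⟩
  have hslope : ∀ m ∈ Set.Icc u w ∩ g ⁻¹' {g v}, u < m ∧ m < w ∧ f' m + M * m = c := by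
    rintro m ⟨hm, hgm⟩
    have hgm : g m = g v := hgm
    have hum : u < m := lt_of_le_of_ne hm.1 (by rintro rfl; linarith)
    have hmw : m < w := lt_of_le_of_ne hm.2 (by rintro rfl; linarith)
    refine ⟨hum, hmw, ?_⟩
    have hloc : IsLocalMax g m := by
      filter_upwards [Icc_mem_nhds hum hmw] with t ht
      rw [hgm]; exact hvmax ht
    have hder : HasDerivAt g (f' m + M * m - c) m := by
      have := ((hf m).add (((hasDerivAt_id m).pow 2).const_mul (M / 2))).sub
        ((hasDerivAt_id m).const_mul c)
      refine this.congr_deriv ?_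
      simp; ring
    linarith [hloc.hasDerivAt_eq_zero hder]
  obtain ⟨m, hm, hleast⟩ := hK.exists_isLeast hKne
  obtain ⟨m', hm', hgreat⟩ := hK.exists_isGreatest hKne
  by_cases hcase : f m ≠ 0 ∨ 0 ≤ f' m
  · obtain ⟨hum, hmw, hs⟩ := hslope m hm
    refine strict_left_max_false hf hM hconv hum hs (fun t ht => ?_) hcase
    have htI : t ∈ Set.Icc u w := ⟨ht.1, by linarith [ht.2]⟩
    have hle : g t ≤ g m := by rw [show g m = g v from hm.2]; exact hvmax htI
    refine lt_of_le_of_ne hle fun h => ?_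
    have := hleast ⟨htI, h.trans hm.2⟩
    linarith [ht.2]
  · -- here `f m = 0` and `f' m < 0`; the rightmost maximum point is used after `t ↦ -t`
    push Not at hcase
    obtain ⟨hum, hmw, hs⟩ := hslope m hm
    obtain ⟨hum', hmw', hs'⟩ := hslope m' hm'
    have hmm : m ≤ m' := hleast hm'
    have hcase' : f m' ≠ 0 ∨ 0 ≤ -f' m' := by
      right
      nlinarith [hcase.2]
    refine strict_left_max_false (f := fun t => f (-t)) (f' := fun t => -f' (-t)) (M := M)
      (c := -c) (u := -w) (m := -m') ?_ hM ?_ (by linarith) ?_ ?_ (by simpa using hcase')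
    · intro t
      simpa [Function.comp_def] using (hf (-t)).scomp t (hasDerivAt_neg t)
    · intro p r hne
      have h1 := hconv (-r) (-p) (fun t ht => by
        have := hne (-t) ⟨by linarith [ht.2], by linarith [ht.1]⟩
        simpa using this)
      refine ⟨convex_Ioo p r, ?_⟩
      intro s hs t ht a b ha hb hab
      have := h1.2 (x := -s) ⟨by linarith [hs.2], by linarith [hs.1]⟩ (y := -t)
        ⟨by linarith [ht.2], by linarith [ht.1]⟩ ha hb hab
      have e : -(a • s + b • t) = a • (-s) + b • (-t) := by simp; ring
      have e2 : (a • s + b • t) ^ 2 = (a • (-s) + b • (-t)) ^ 2 := by rw [← e]; ring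
      simp only [e, e2]
      simpa [hq] using this
    · simp; linarith
    · intro t ht
      have htI : -t ∈ Set.Icc u w := ⟨by linarith [ht.2], by linarith [ht.1]⟩
      have hle : g (-t) ≤ g m' := by rw [show g m' = g v from hm'.2]; exact hvmax htI
      have hlt' : g (-t) < g m' := by
        refine lt_of_le_of_ne hle fun h => ?_
        have := hgreat ⟨htI, h.trans hm'.2⟩
        linarith [ht.2]
      simp only [hg] at hlt'
      simp only [neg_neg]
      nlinarith

/-! ### The norm and its dual -/

/-- `N` dominates a multiple of the Euclidean norm, so its unit ball is bounded. -/
lemma IsNorm.exists_le {n : ℕ} {N : EuclideanSpace ℝ (Fin n) → ℝ} (hN : IsNorm N) :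
    ∃ c > 0, ∀ x, c * ‖x‖ ≤ N x := by
  obtain ⟨h0, hz, hs, ht⟩ := hN
  have hconv : ConvexOn ℝ Set.univ N := by
    refine ⟨convex_univ, fun x _ y _ a b ha hb _ => (ht _ _).trans ?_⟩
    rw [hs, hs, abs_of_nonneg ha, abs_of_nonneg hb]; rfl
  have hcont : Continuous N := hconv.locallyLipschitz.continuous
  rcases (Metric.sphere (0 : EuclideanSpace ℝ (Fin n)) 1).eq_empty_or_nonempty with he | hne
  · refine ⟨1, one_pos, fun x => ?_⟩
    by_cases hx : x = 0
    · subst hx; simpa using h0 0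
    · have : (‖x‖⁻¹ • x) ∈ Metric.sphere (0 : EuclideanSpace ℝ (Fin n)) 1 := by
        simp [norm_smul, norm_ne_zero_iff.2 hx]
      simp [he] at this
  · obtain ⟨v, hv, hmin⟩ := (isCompact_sphere _ _).exists_isMinOn hne hcont.continuousOn
    have hv1 : ‖v‖ = 1 := by simpa using hv
    have hv0 : v ≠ 0 := by rintro rfl; simp at hv1
    refine ⟨N v, lt_of_le_of_ne (h0 v) fun h => hv0 ((hz v).1 h.symm), fun x => ?_⟩
    by_cases hx : x = 0
    · subst hx; simpa using h0 0
    · have hxn : 0 < ‖x‖ := norm_pos_iff.2 hx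
      have hmem : (‖x‖⁻¹ • x) ∈ Metric.sphere (0 : EuclideanSpace ℝ (Fin n)) 1 := by
        simp [norm_smul, norm_ne_zero_iff.2 hx]
      have h1 : N v ≤ N (‖x‖⁻¹ • x) := hmin hmem
      rw [hs, abs_of_pos (inv_pos.2 hxn), inv_mul_eq_div, le_div_iff₀ hxn] at h1
      exact h1

/-- The generalized Cauchy–Schwarz inequality for the pair `N`, `dualNorm N`. -/
lemma inner_le_mul_dualNorm {n : ℕ} {N : EuclideanSpace ℝ (Fin n) → ℝ} (hN : IsNorm N)
    (x y : EuclideanSpace ℝ (Fin n)) : ⟪x, y⟫ ≤ N x * dualNorm N y := by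
  obtain ⟨c, hc, hle⟩ := hN.exists_le
  obtain ⟨h0, hz, hs, ht⟩ := hN
  have hbdd : BddAbove {r : ℝ | ∃ x : EuclideanSpace ℝ (Fin n), N x ≤ 1 ∧ r = ⟪x, y⟫} := by
    refine ⟨c⁻¹ * ‖y‖, ?_⟩
    rintro r ⟨x, hx, rfl⟩
    refine (real_inner_le_norm x y).trans (mul_le_mul_of_nonneg_right ?_ (norm_nonneg y))
    rw [← one_div, le_div_iff₀ hc]
    linarith [hle x]
  by_cases hx : x = 0
  · subst hx; simp [(hz 0).2 rfl]
  · have hpos : 0 < N x := lt_of_le_of_ne (h0 x) fun h => hx ((hz x).1 h.symm)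
    have h1 : ⟪(N x)⁻¹ • x, y⟫ ≤ dualNorm N y := by
      refine le_csSup hbdd ⟨(N x)⁻¹ • x, ?_, rfl⟩
      rw [hs, abs_of_pos (inv_pos.2 hpos), inv_mul_cancel₀ hpos.ne']
    rw [real_inner_smul_left, inv_mul_eq_div, div_le_iff₀ hpos] at h1
    linarith

/-! ### First-order bounds for the expected loss -/

/-- Derivative of a function along a line, in terms of its gradient. -/
lemma hasDerivAt_line {n : ℕ} {f : EuclideanSpace ℝ (Fin n) → ℝ}
    {y h g : EuclideanSpace ℝ (Fin n)} {t : ℝ} (hf : HasGradientAt f g (y + t • h)) :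
    HasDerivAt (fun s : ℝ => f (y + s • h)) ⟪g, h⟫ t := by
  have h1 : HasDerivAt (fun s : ℝ => y + s • h) h t := by
    simpa using ((hasDerivAt_id t).smul_const h).const_add y
  have := hf.hasFDerivAt.comp_hasDerivAt t h1
  simpa [Function.comp_def] using this

/-- Convexity passes through an expectation over a convex set of parameters at which the
integrand is integrable. -/
lemma convexOn_integral {Ξ : Type} [MeasurableSpace Ξ] {ν : Measure Ξ} {S : Set ℝ}
    (hS : Convex ℝ S) {G : ℝ → Ξ → ℝ} (hG : ∀ ξ, ConvexOn ℝ Set.univ fun t => G t ξ)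
    (hint : ∀ t ∈ S, Integrable (G t) ν) : ConvexOn ℝ S (fun t => ∫ ξ, G t ξ ∂ν) := by
  refine ⟨hS, fun s hs t ht a b ha hb hab => ?_⟩
  have h1 : Integrable (fun ξ => a * G s ξ) ν := (hint s hs).const_mul a
  have h2 : Integrable (fun ξ => b * G t ξ) ν := (hint t ht).const_mul b
  calc ∫ ξ, G (a • s + b • t) ξ ∂ν ≤ ∫ ξ, (a * G s ξ + b * G t ξ) ∂ν :=
        integral_mono (hint _ (hS hs ht ha hb hab)) (h1.add h2)
          fun ξ => (hG ξ).2 trivial trivial ha hb hab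
    _ = a • (∫ ξ, G s ξ ∂ν) + b • ∫ ξ, G t ξ ∂ν := by
        rw [integral_add h1 h2, integral_const_mul, integral_const_mul]; rfl

/-- The first-order convexity inequality on the line, between the points `0` and `1`. -/
lemma tangent_le_of_convexOn {f : ℝ → ℝ} {c : ℝ} (hf : ConvexOn ℝ Set.univ f)
    (hd : HasDerivAt f c 0) : f 0 + c ≤ f 1 := by
  have := hf.le_slope_of_hasDerivAt trivial trivial one_pos hd
  rw [slope_def_field] at this
  linarith [this, show (f 1 - f 0) / (1 - 0) = f 1 - f 0 by ring]

/-- The expected loss `f` is convex with `L`-Lipschitz gradient, in the form of its two first-order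
bounds. No measurability in `ξ` is assumed, so `F y ·` need not be integrable for all `y`; the
integral, hence `f`, vanishes wherever it is not. Along a line, `f` therefore inherits the convexity
properties of the integrands on every interval without zeros, which suffices by
`convexOn_univ_of_nonvanishing`. -/
lemma expectation_bounds {n : ℕ} {N : EuclideanSpace ℝ (Fin n) → ℝ} (hN : IsNorm N)
    {Ξ : Type} [MeasurableSpace Ξ] {ν : Measure Ξ} [IsProbabilityMeasure ν]
    {F : EuclideanSpace ℝ (Fin n) → Ξ → ℝ}
    {gF : EuclideanSpace ℝ (Fin n) → Ξ → EuclideanSpace ℝ (Fin n)}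
    (hFconv : ∀ ξ, ConvexOn ℝ Set.univ fun x => F x ξ)
    (hFgrad : ∀ ξ x, HasGradientAt (fun y => F y ξ) (gF x ξ) x)
    {f : EuclideanSpace ℝ (Fin n) → ℝ}
    {gf : EuclideanSpace ℝ (Fin n) → EuclideanSpace ℝ (Fin n)}
    (hf : ∀ x, f x = ∫ ξ, F x ξ ∂ν) (hgf : ∀ x, HasGradientAt f (gf x) x)
    {L : ℝ} (hL : 0 ≤ L)
    (hA2 : ∀ ξ y z, dualNorm N (gF y ξ - gF z ξ) ≤ L * N (y - z))
    (y z : EuclideanSpace ℝ (Fin n)) :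
    f y + ⟪gf y, z - y⟫ ≤ f z ∧
      f z ≤ f y + ⟪gf y, z - y⟫ + L / 2 * N (z - y) ^ 2 := by
  set h := z - y with hh
  set M : ℝ := L * N h ^ 2 with hM
  have hM0 : 0 ≤ M := by positivity
  have hd : ∀ t : ℝ, HasDerivAt (fun s : ℝ => f (y + s • h)) ⟪gf (y + t • h), h⟫ t :=
    fun t => hasDerivAt_line (hgf _)
  have hd0 : HasDerivAt (fun s : ℝ => f (y + s • h)) ⟪gf y, h⟫ 0 := by simpa using hd 0
  have hint : ∀ t : ℝ, f (y + t • h) ≠ 0 → Integrable (fun ξ => F (y + t • h) ξ) ν := by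
    intro t ht
    by_contra hni
    exact ht (by rw [hf, integral_undef hni])
  have hconv1 : ∀ ξ, ConvexOn ℝ Set.univ fun t : ℝ => F (y + t • h) ξ := by
    intro ξ
    refine ⟨convex_univ, fun s _ t _ a b ha hb hab => ?_⟩
    have e : y + (a • s + b • t) • h = a • (y + s • h) + b • (y + t • h) := by
      have : y = (a + b) • y := by rw [hab, one_smul]
      nth_rewrite 1 [this]
      simp only [smul_eq_mul]
      module
    have := (hFconv ξ).2 (x := y + s • h) trivial (y := y + t • h) trivial ha hb hab
    simpa only [e] using this
  have hconv2 : ∀ ξ, ConvexOn ℝ Set.univ fun t : ℝ => M / 2 * t ^ 2 - F (y + t • h) ξ := by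
    intro ξ
    have hder : ∀ t : ℝ, HasDerivAt (fun t : ℝ => M / 2 * t ^ 2 - F (y + t • h) ξ)
        (M * t - ⟪gF (y + t • h) ξ, h⟫) t := by
      intro t
      have := (((hasDerivAt_id t).pow 2).const_mul (M / 2)).sub
        (hasDerivAt_line (y := y) (h := h) (hFgrad ξ (y + t • h)))
      refine this.congr_deriv ?_
      simp; ring
    refine Monotone.convexOn_univ_of_deriv (fun t => (hder t).differentiableAt) ?_
    intro s t hst
    rw [(hder s).deriv, (hder t).deriv]
    have h1 : ⟪h, gF (y + t • h) ξ - gF (y + s • h) ξ⟫ ≤ M * (t - s) := by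
      refine (inner_le_mul_dualNorm hN _ _).trans ?_
      refine (mul_le_mul_of_nonneg_left (hA2 ξ _ _) (hN.1 h)).trans (le_of_eq ?_)
      have e : (y + t • h) - (y + s • h) = (t - s) • h := by module
      rw [e, hN.2.2.1, abs_of_nonneg (by linarith)]
      rw [hM]; ring
    rw [inner_sub_right, real_inner_comm, real_inner_comm (gF (y + s • h) ξ)] at h1
    linarith
  constructor
  · have key := convexOn_univ_of_nonvanishing hd le_rfl (M := 0) (fun p q hne => by
      simpa [hf] using convexOn_integral (convex_Ioo p q) hconv1 fun t ht => hint t (hne t ht))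
    have key' : ConvexOn ℝ Set.univ (fun s : ℝ => f (y + s • h)) := by simpa using key
    have := tangent_le_of_convexOn key' hd0
    simpa [hh] using this
  · have key := convexOn_univ_of_nonvanishing (fun t => (hd t).neg) hM0 (fun p q hne => by
      have hI : ∀ t ∈ Set.Ioo p q, Integrable (fun ξ => F (y + t • h) ξ) ν :=
        fun t ht => hint t (by simpa using hne t ht)
      refine (convexOn_integral (ν := ν) (convex_Ioo p q) hconv2
        fun t ht => (integrable_const _).sub (hI t ht)).congr ?_
      intro t ht
      simp only [Pi.neg_apply]
      rw [integral_sub (integrable_const _) (hI t ht), hf]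
      simp; ring)
    have hd0' := hd0.neg.add (((hasDerivAt_id (0 : ℝ)).pow 2).const_mul (M / 2))
    have := tangent_le_of_convexOn key (hd0'.congr_deriv (g' := -⟪gf y, h⟫) (by simp))
    simp [hh] at this
    rw [hM, hh] at this
    simp only [hh]
    linarith

/-! ### The proximal step -/

/-- First-order optimality in the proximal step: a minimizer `p` of
`⟪g, ·⟫ + Ψ + c * D a` over `S` yields a subgradient of `Ψ` at `p`. -/
lemma prox_subgradient {n : ℕ} {S : Set (EuclideanSpace ℝ (Fin n))} (hS : Convex ℝ S)
    {Ψ w : EuclideanSpace ℝ (Fin n) → ℝ} (hΨ : ConvexOn ℝ S Ψ)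
    {g ga gp p : EuclideanSpace ℝ (Fin n)} {c : ℝ} (hp : p ∈ S) (hw : HasGradientAt w gp p)
    (hmin : ∀ z ∈ S, ⟪g, p⟫ + Ψ p + c * (w p - ⟪ga, p⟫) ≤ ⟪g, z⟫ + Ψ z + c * (w z - ⟪ga, z⟫))
    {y : EuclideanSpace ℝ (Fin n)} (hy : y ∈ S) :
    Ψ p + ⟪c • (ga - gp) - g, y - p⟫ ≤ Ψ y := by
  -- `r t - r 0` bounds from above the change of the objective between `p` and `p + t • (y - p)`
  set r : ℝ → ℝ := fun t => t * (⟪g, y - p⟫ + (Ψ y - Ψ p) - c * ⟪ga, y - p⟫) +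
    c * w (p + t • (y - p)) with hr
  have hder : HasDerivAt r (⟪g, y - p⟫ + (Ψ y - Ψ p) - c * ⟪ga, y - p⟫ + c * ⟪gp, y - p⟫) 0 := by
    have h1 := hasDerivAt_line (f := w) (y := p) (h := y - p) (t := 0) (g := gp) (by simpa using hw)
    have := ((hasDerivAt_id (0 : ℝ)).mul_const
      (⟪g, y - p⟫ + (Ψ y - Ψ p) - c * ⟪ga, y - p⟫)).add (h1.const_mul c)
    refine this.congr_deriv ?_
    simp
  have hge : ∀ t ∈ Set.Ioo (0 : ℝ) 1, 0 ≤ slope r 0 t := by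
    intro t ht
    have hz : p + t • (y - p) = (1 - t) • p + t • y := by module
    have hzS : p + t • (y - p) ∈ S := by
      rw [hz]; exact hS hp hy (by linarith [ht.2]) ht.1.le (by ring)
    have h1 := hmin _ hzS
    have h2 : Ψ (p + t • (y - p)) ≤ (1 - t) * Ψ p + t * Ψ y := by
      rw [hz]; exact hΨ.2 hp hy (by linarith [ht.2]) ht.1.le (by ring)
    rw [inner_add_right, inner_add_right, real_inner_smul_right, real_inner_smul_right] at h1
    rw [slope_def_field]
    refine div_nonneg ?_ (by linarith [ht.1])
    simp only [hr, zero_mul, zero_smul, add_zero, zero_add]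
    linarith
  have h0 : 0 ≤ ⟪g, y - p⟫ + (Ψ y - Ψ p) - c * ⟪ga, y - p⟫ + c * ⟪gp, y - p⟫ := by
    have ht := (hasDerivAt_iff_tendsto_slope.1 hder).mono_left
      (nhdsWithin_mono (0 : ℝ) (fun t (ht : t ∈ Set.Ioi (0 : ℝ)) => ne_of_gt ht))
    refine ge_of_tendsto ht ?_
    filter_upwards [Ioo_mem_nhdsGT (zero_lt_one' ℝ)] with t ht using hge t ht
  rw [inner_sub_left, real_inner_smul_left, inner_sub_left]
  linarith

/-! ### Delays -/

/-- The window sums of a nonnegative sequence over the last `τ + 1` indices add up to at most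
`τ + 1` times its sum. -/
lemma sum_window_le (τ T : ℕ) (a : ℕ → ℝ) (ha : ∀ j, 0 ≤ a j) :
    ∑ k ∈ Finset.range T, ∑ j ∈ Finset.Icc (k - τ) k, a j ≤ (τ + 1) * ∑ j ∈ Finset.range T, a j := by
  have h1 : ∑ k ∈ Finset.range T, ∑ j ∈ Finset.Icc (k - τ) k, a j
      = ∑ j ∈ Finset.range T, ∑ k ∈ Finset.range T with k - τ ≤ j ∧ j ≤ k, a j := by
    refine Finset.sum_comm' fun k j => ?_
    simp only [Finset.mem_range, Finset.mem_Icc, Finset.mem_filter]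
    omega
  rw [h1, Finset.mul_sum]
  refine Finset.sum_le_sum fun j _ => ?_
  rw [Finset.sum_const, nsmul_eq_mul]
  refine mul_le_mul_of_nonneg_right ?_ (ha j)
  have hsub : (Finset.range T).filter (fun k => k - τ ≤ j ∧ j ≤ k) ⊆ Finset.Icc j (j + τ) := by
    intro k
    simp only [Finset.mem_range, Finset.mem_Icc, Finset.mem_filter]
    omega
  have := Finset.card_le_card hsub
  rw [Nat.card_Icc] at this
  have h2 : (Finset.filter (fun k => k - τ ≤ j ∧ j ≤ k) (Finset.range T)).card ≤ τ + 1 := by omega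
  exact_mod_cast h2

/-- The displacement over a delay of at most `τ` steps, bounded by the step lengths through the
triangle inequality and Cauchy–Schwarz. -/
lemma sq_delay_le {n : ℕ} {N : EuclideanSpace ℝ (Fin n) → ℝ} (hN : IsNorm N)
    (X : ℕ → EuclideanSpace ℝ (Fin n)) {τ d k : ℕ} (hd : d ≤ k) (hτ : k - d ≤ τ) :
    N (X (k + 1) - X d) ^ 2 ≤ (τ + 1) * ∑ j ∈ Finset.Icc (k - τ) k, N (X (j + 1) - X j) ^ 2 := by
  have htri : ∀ m, d ≤ m → N (X m - X d) ≤ ∑ j ∈ Finset.Ico d m, N (X (j + 1) - X j) := by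
    intro m hm
    induction m, hm using Nat.le_induction with
    | base => simp [(hN.2.1 0).2 rfl]
    | succ m hm ih =>
      rw [Finset.sum_Ico_succ_top hm]
      have := hN.2.2.2 (X m - X d) (X (m + 1) - X m)
      rw [show X m - X d + (X (m + 1) - X m) = X (m + 1) - X d by abel] at this
      linarith
  have h1 := htri (k + 1) (by omega)
  have h2 : N (X (k + 1) - X d) ^ 2 ≤ (∑ j ∈ Finset.Ico d (k + 1), N (X (j + 1) - X j)) ^ 2 :=
    pow_le_pow_left₀ (hN.1 _) h1 2
  refine h2.trans (sq_sum_le_card_mul_sum_sq.trans ?_)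
  refine mul_le_mul ?_ ?_ (Finset.sum_nonneg fun _ _ => sq_nonneg _) (by positivity)
  · rw [Nat.card_Ico]
    have : k + 1 - d ≤ τ + 1 := by omega
    exact_mod_cast this
  · refine Finset.sum_le_sum_of_subset_of_nonneg ?_ fun _ _ _ => sq_nonneg _
    intro j
    simp only [Finset.mem_Ico, Finset.mem_Icc]
    omega

/-! ### The summed recursion -/

/-- Lemma 2: the summed recursion satisfied by the iterates of
Algorithm 1 under Assumptions (A1)–(A4), with step-sizes
`γ(k) = 1/(η(k) + L(τ_max+1)²)` for a strictly positive sequence `η`. -/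
theorem stmt_3 {n : ℕ} (N : EuclideanSpace ℝ (Fin n) → ℝ) (hN : IsNorm N)
    -- the sample space `Ξ`, the distribution `𝒫`, and the random loss `F`
    (Ξ : Type) [MeasurableSpace Ξ] (ν : Measure Ξ) [IsProbabilityMeasure ν]
    (F : EuclideanSpace ℝ (Fin n) → Ξ → ℝ)
    (gF : EuclideanSpace ℝ (Fin n) → Ξ → EuclideanSpace ℝ (Fin n))
    (hFconv : ∀ ξ, ConvexOn ℝ Set.univ fun x => F x ξ)
    (hFgrad : ∀ ξ x, HasGradientAt (fun y => F y ξ) (gF x ξ) x)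
    -- the expectation function `f` and its gradient
    (f : EuclideanSpace ℝ (Fin n) → ℝ)
    (gf : EuclideanSpace ℝ (Fin n) → EuclideanSpace ℝ (Fin n))
    (hf : ∀ x, f x = ∫ ξ, F x ξ ∂ν)
    (hgf : ∀ x, HasGradientAt f (gf x) x)
    (hgfE : ∀ x, gf x = ∫ ξ, gF x ξ ∂ν)
    -- (A2) Lipschitz continuity of the gradients, (A3) bounded gradient variance
    (L : ℝ) (hL : 0 ≤ L)
    (hA2 : ∀ ξ y z, dualNorm N (gF y ξ - gF z ξ) ≤ L * N (y - z))
    (σ : ℝ) (hσ : 0 ≤ σ)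
    (hA3 : ∀ x, ∫ ξ, (dualNorm N (gF x ξ - gf x)) ^ 2 ∂ν ≤ σ ^ 2)
    -- (A4) the regularizer `Ψ`, convex (μΨ = 0) or `μΨ`-strongly convex,
    -- with closed effective domain `S`
    (S : Set (EuclideanSpace ℝ (Fin n))) (hSclosed : IsClosed S) (hSconv : Convex ℝ S)
    (hSne : S.Nonempty)
    (Ψ : EuclideanSpace ℝ (Fin n) → ℝ) (μΨ : ℝ) (hμΨ : 0 ≤ μΨ)
    (hΨconv : ConvexOn ℝ S Ψ)
    (hΨstrong : ∀ x ∈ S, ∀ s : EuclideanSpace ℝ (Fin n),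
      (∀ y ∈ S, Ψ x + ⟪s, y - x⟫ ≤ Ψ y) →
      ∀ y ∈ S, Ψ x + ⟪s, y - x⟫ + μΨ / 2 * (N (y - x)) ^ 2 ≤ Ψ y)
    -- the distance generating function `ω` with gradient `gw`, 1-strongly convex
    -- w.r.t. `N` on `S`, and the Bregman distance `D`
    (w : EuclideanSpace ℝ (Fin n) → ℝ)
    (gw : EuclideanSpace ℝ (Fin n) → EuclideanSpace ℝ (Fin n))
    (hw : ∀ x ∈ S, HasGradientAt w (gw x) x) (hgwc : ContinuousOn gw S)
    (hwstrong : ∀ x ∈ S, ∀ y ∈ S, w x + ⟪gw x, y - x⟫ + 1 / 2 * (N (y - x)) ^ 2 ≤ w y)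
    (D : EuclideanSpace ℝ (Fin n) → EuclideanSpace ℝ (Fin n) → ℝ)
    (hD : ∀ x y, D x y = w y - w x - ⟪gw x, y - x⟫)
    -- the composite objective `φ = f + Ψ` and (A1) an optimizer `x*`
    (φ : EuclideanSpace ℝ (Fin n) → ℝ) (hφ : ∀ x, φ x = f x + Ψ x)
    (xstar : EuclideanSpace ℝ (Fin n)) (hxstar : xstar ∈ S)
    (hopt : ∀ z ∈ S, φ xstar ≤ φ z)
    (φstar : ℝ) (hφstar : φstar = φ xstar)
    -- Algorithm 1: delays, batch size, samples, step-sizes, iterates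
    (τmax : ℕ) (d : ℕ → ℕ) (hd : ∀ k, d k ≤ k ∧ k - d k ≤ τmax)
    (b : ℕ) (hb : 0 < b)
    (ξ : ℕ → Fin b → Ξ)
    (η : ℕ → ℝ) (hη : ∀ k, 0 < η k)
    (γ : ℕ → ℝ) (hγ : ∀ k : ℕ, γ k = 1 / (η k + L * ((τmax : ℝ) + 1) ^ 2))
    (x : ℤ → EuclideanSpace ℝ (Fin n))
    (hxneg : ∀ k : ℤ, k ≤ 0 → x k = x 0)
    (hxS : ∀ k : ℤ, x k ∈ S)
    (gave : ℕ → EuclideanSpace ℝ (Fin n))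
    (hgave : ∀ k : ℕ, gave k = (b : ℝ)⁻¹ • ∑ i, gF (x (d k)) (ξ k i))
    (hrec : ∀ k : ℕ, ∀ z ∈ S,
      ⟪gave k, x ((k : ℤ) + 1)⟫ + Ψ (x ((k : ℤ) + 1)) + 1 / γ k * D (x (k : ℤ)) (x ((k : ℤ) + 1))
        ≤ ⟪gave k, z⟫ + Ψ z + 1 / γ k * D (x (k : ℤ)) z)
    -- the gradient errors `e(d(k)) = ∇f(x(d(k))) - g_ave(d(k))`
    (e : ℕ → EuclideanSpace ℝ (Fin n)) (he : ∀ k : ℕ, e k = gf (x (d k)) - gave k)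
    (T : ℕ) (hT : 0 < T) :
    ∑ k ∈ Finset.range T, (φ (x ((k : ℤ) + 1)) - φstar)
      ≤ ∑ k ∈ Finset.range T, 1 / (2 * η k) * (dualNorm N (e k)) ^ 2
        + ∑ k ∈ Finset.range T, ⟪e k, x (k : ℤ) - xstar⟫
        + 1 / γ 0 * D (x (0 : ℤ)) xstar
        + ∑ k ∈ Finset.range T, (1 / γ (k + 1) - 1 / γ k) * D (x ((k : ℤ) + 1)) xstar
        - μΨ / 2 * ∑ k ∈ Finset.range T, (N (x ((k : ℤ) + 1) - xstar)) ^ 2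
    := by
  set X : ℕ → EuclideanSpace ℝ (Fin n) := fun k => x (k : ℤ) with hX
  have hXs : ∀ k : ℕ, x ((k : ℤ) + 1) = X (k + 1) := fun k => by simp [hX]
  have hX0 : x (0 : ℤ) = X 0 := by simp [hX]
  have hXS : ∀ k, X k ∈ S := fun k => hxS _
  have hc : ∀ k, 1 / γ k = η k + L * ((τmax : ℝ) + 1) ^ 2 := fun k => by rw [hγ, one_div_one_div]
  have hcpos : ∀ k, 0 < 1 / γ k := fun k => by
    rw [hc]
    have := hη k
    positivity
  have hD0 : ∀ p ∈ S, ∀ q ∈ S, 1 / 2 * N (q - p) ^ 2 ≤ D p q := fun p hp q hq => by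
    rw [hD]; linarith [hwstrong p hp q hq]
  have hNsymm : ∀ p q, N (p - q) = N (q - p) := fun p q => by
    have := hN.2.2.1 (-1) (q - p)
    simpa using this
  have hbd := expectation_bounds hN hFconv hFgrad hf hgf hL hA2
  -- the one-step estimate, before the delay term is resolved
  have hstep : ∀ k : ℕ, φ (X (k + 1)) - φstar ≤
      1 / (2 * η k) * (dualNorm N (e k)) ^ 2 + ⟪e k, X k - xstar⟫
      + 1 / γ k * D (X k) xstar - 1 / γ k * D (X (k + 1)) xstar
      - μΨ / 2 * N (X (k + 1) - xstar) ^ 2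
      + L / 2 * N (X (k + 1) - X (d k)) ^ 2
      - L * ((τmax : ℝ) + 1) ^ 2 / 2 * N (X (k + 1) - X k) ^ 2 := by
    intro k
    have hsub : ∀ y ∈ S, Ψ (X (k + 1)) +
        ⟪(1 / γ k) • (gw (X k) - gw (X (k + 1))) - gave k, y - X (k + 1)⟫ ≤ Ψ y := by
      intro y hy
      refine prox_subgradient hSconv hΨconv (hXS _) (hw _ (hXS _)) (fun z hz => ?_) hy
      have := hrec k z hz
      rw [hXs, hD, hD, inner_sub_right, inner_sub_right] at this
      linarith
    have hΨ := hΨstrong _ (hXS (k + 1)) _ hsub xstar hxstar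
    rw [inner_sub_left, real_inner_smul_left, inner_sub_left] at hΨ
    -- the three-point identity for the Bregman distance
    have h3 : ⟪gw (X k), xstar - X (k + 1)⟫ - ⟪gw (X (k + 1)), xstar - X (k + 1)⟫ =
        D (X (k + 1)) xstar + D (X k) (X (k + 1)) - D (X k) xstar := by
      rw [hD, hD, hD]
      simp only [inner_sub_right]
      ring
    rw [h3, hNsymm] at hΨ
    have hlow := (hbd (X (d k)) xstar).1
    have hupp := (hbd (X (d k)) (X (k + 1))).2
    have hyoung : ⟪e k, X (k + 1) - X k⟫ ≤
        1 / (2 * η k) * (dualNorm N (e k)) ^ 2 + η k / 2 * N (X (k + 1) - X k) ^ 2 := by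
      have h1 := inner_le_mul_dualNorm hN (X (k + 1) - X k) (e k)
      rw [real_inner_comm] at h1
      refine h1.trans ?_
      have hηk := hη k
      have h2 : 0 ≤ 1 / (2 * η k) * (dualNorm N (e k) - η k * N (X (k + 1) - X k)) ^ 2 := by
        positivity
      have h4 : 1 / (2 * η k) * (dualNorm N (e k) - η k * N (X (k + 1) - X k)) ^ 2 =
          1 / (2 * η k) * (dualNorm N (e k)) ^ 2 + η k / 2 * N (X (k + 1) - X k) ^ 2
          - N (X (k + 1) - X k) * dualNorm N (e k) := by
        field_simp
        ring
      linarith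
    have hbreg := mul_le_mul_of_nonneg_left (hD0 _ (hXS k) _ (hXS (k + 1))) (hcpos k).le
    have hcoef : 1 / γ k * (1 / 2 * N (X (k + 1) - X k) ^ 2) = η k / 2 * N (X (k + 1) - X k) ^ 2
        + L * ((τmax : ℝ) + 1) ^ 2 / 2 * N (X (k + 1) - X k) ^ 2 := by
      rw [hc]; ring
    have hek : ⟪e k, X k - xstar⟫ + ⟪e k, X (k + 1) - X k⟫ =
        ⟪gf (X (d k)), X (k + 1) - X (d k)⟫ - ⟪gf (X (d k)), xstar - X (d k)⟫
        + ⟪gave k, xstar - X (k + 1)⟫ := by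
      rw [show e k = gf (X (d k)) - gave k from he k]
      simp only [inner_sub_right, inner_sub_left]
      ring
    rw [hφstar, hφ, hφ]
    linarith
  have hdelay : ∑ k ∈ Finset.range T, L / 2 * N (X (k + 1) - X (d k)) ^ 2 ≤
      ∑ k ∈ Finset.range T, L * ((τmax : ℝ) + 1) ^ 2 / 2 * N (X (k + 1) - X k) ^ 2 := by
    rw [← Finset.mul_sum, ← Finset.mul_sum]
    have h1 : ∑ k ∈ Finset.range T, N (X (k + 1) - X (d k)) ^ 2 ≤
        ((τmax : ℝ) + 1) * (((τmax : ℝ) + 1) *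
          ∑ k ∈ Finset.range T, N (X (k + 1) - X k) ^ 2) := by
      refine (Finset.sum_le_sum fun k _ => sq_delay_le hN X (hd k).1 (hd k).2).trans ?_
      rw [← Finset.mul_sum]
      exact mul_le_mul_of_nonneg_left
        (sum_window_le τmax T (fun j => N (X (j + 1) - X j) ^ 2) fun _ => sq_nonneg _)
        (by positivity)
    have h2 := mul_le_mul_of_nonneg_left h1 (show 0 ≤ L / 2 by positivity)
    refine h2.trans (le_of_eq ?_)
    ring
  -- Abel summation of the Bregman terms; the boundary term at `T` is nonnegative
  have htel : ∑ k ∈ Finset.range T, (1 / γ k * D (X k) xstar - 1 / γ k * D (X (k + 1)) xstar) ≤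
      1 / γ 0 * D (X 0) xstar +
        ∑ k ∈ Finset.range T, (1 / γ (k + 1) - 1 / γ k) * D (X (k + 1)) xstar := by
    have h1 := Finset.sum_range_sub (fun k => 1 / γ k * D (X k) xstar) T
    have h2 : 0 ≤ 1 / γ T * D (X T) xstar :=
      mul_nonneg (hcpos T).le ((by positivity : (0 : ℝ) ≤ 1 / 2 * N (xstar - X T) ^ 2).trans
        (hD0 _ (hXS T) _ hxstar))
    have h3 : ∑ k ∈ Finset.range T, (1 / γ (k + 1) - 1 / γ k) * D (X (k + 1)) xstar =
        ∑ k ∈ Finset.range T, (1 / γ (k + 1) * D (X (k + 1)) xstar - 1 / γ k * D (X k) xstar) +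
        ∑ k ∈ Finset.range T, (1 / γ k * D (X k) xstar - 1 / γ k * D (X (k + 1)) xstar) := by
      rw [← Finset.sum_add_distrib]
      exact Finset.sum_congr rfl fun k _ => by ring
    rw [h3, h1]
    linarith
  have hsum := Finset.sum_le_sum fun k (_ : k ∈ Finset.range T) => hstep k
  simp only [Finset.sum_add_distrib, Finset.sum_sub_distrib, ← Finset.mul_sum] at hsum htel hdelay
  simp only [Finset.sum_sub_distrib, hXs, hX0]
  linarith
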